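/- Let N ≥ 1 and for m,n,p ∈ {0,…,N+1} let u_{m,n,p} : ℝ → ℝ be twice differentiable, satisfying at all interior indices m,n,p ∈ {1,…,N} the conservative lattice equation ü_{m,n,p} − c²∇²u_{m,n,p} + μu_{m,n,p} + V′(u_{m,n,p}) − J = 0 (i.e., β = γ = 0), satisfying the discrete Neumann conditions u_{N+1,n,p}(t) = u_{N,n,p}(t), u_{m,N+1,p}(t) = u_{m,N,p}(t), u_{m,n,N+1}(t) = u_{m,n,N}(t) for all m,n,p ∈ {1,…,N} and all t, and such that every boundary node with m = 0, n = 0 or p = 0 is constant in time (u̇ = 0 there). Then the total energy E(t) is constant: dE/dt = 0 for all t. -/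

import Mathlib

noncomputable section

open Finset

/-- Discrete Laplacian on the three-dimensional lattice. -/
def dLap (u : ℤ → ℤ → ℤ → ℝ → ℝ) (m n p : ℤ) (t : ℝ) : ℝ :=
  u (m + 1) n p t + u (m - 1) n p t + u m (n + 1) p t + u m (n - 1) p t
    + u m n (p + 1) t + u m n (p - 1) t - 6 * u m n p t

/-- Time derivative of the node function. -/
def ud (u : ℤ → ℤ → ℤ → ℝ → ℝ) (m n p : ℤ) (t : ℝ) : ℝ := deriv (u m n p) t

/-- Hamiltonian of the lattice node at `(m,n,p)`. -/
def nodeH (c μ J : ℝ) (V : ℝ → ℝ) (u : ℤ → ℤ → ℤ → ℝ → ℝ) (m n p : ℤ) (t : ℝ) : ℝ :=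
  (1:ℝ)/2 * ((ud u m n p t) ^ 2 + c ^ 2 * (u (m + 1) n p t - u m n p t) ^ 2
      + c ^ 2 * (u m (n + 1) p t - u m n p t) ^ 2
      + c ^ 2 * (u m n (p + 1) t - u m n p t) ^ 2
      + μ * (u m n p t) ^ 2)
    + V (u m n p t) - J * u m n p t

/-- Total energy of the lattice system. -/
def totE (N : ℕ) (c μ J : ℝ) (V : ℝ → ℝ) (u : ℤ → ℤ → ℤ → ℝ → ℝ) (t : ℝ) : ℝ :=
  (∑ m ∈ Icc (1:ℤ) (N:ℤ), ∑ n ∈ Icc (1:ℤ) (N:ℤ), ∑ p ∈ Icc (1:ℤ) (N:ℤ),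
      nodeH c μ J V u m n p t)
    + c ^ 2 / 2 *
      ((∑ n ∈ Icc (1:ℤ) (N:ℤ), ∑ p ∈ Icc (1:ℤ) (N:ℤ), (u 1 n p t - u 0 n p t) ^ 2)
        + (∑ m ∈ Icc (1:ℤ) (N:ℤ), ∑ p ∈ Icc (1:ℤ) (N:ℤ), (u m 1 p t - u m 0 p t) ^ 2)
        + (∑ m ∈ Icc (1:ℤ) (N:ℤ), ∑ n ∈ Icc (1:ℤ) (N:ℤ), (u m n 1 t - u m n 0 t) ^ 2))

/-- Summation by parts on `{1, …, N}`, with boundary terms. -/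
lemma sum_Icc_mul_sub_add_mul_second_difference (f g : ℤ → ℝ) (N : ℕ) :
    ∑ m ∈ Icc (1:ℤ) (N:ℤ), ((f (m + 1) - f m) * (g (m + 1) - g m)
        + g m * (f (m + 1) + f (m - 1) - 2 * f m))
      = (f ((N:ℤ) + 1) - f N) * g ((N:ℤ) + 1) - (f 1 - f 0) * g 1 := by
  induction N with
  | zero => simp
  | succ k ih =>
    have hIcc : Icc (1:ℤ) ((k + 1 : ℕ) : ℤ) = insert ((k:ℤ) + 1) (Icc (1:ℤ) (k:ℤ)) := by
      ext x
      simp only [mem_Icc, mem_insert]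
      omega
    rw [hIcc, sum_insert (by simp), ih]
    push_cast
    rw [show (k:ℤ) + 1 - 1 = k by ring]
    ring

/-- Time derivative of the node Hamiltonian along a solution of the conservative equation. -/
lemma hasDerivAt_nodeH (c μ J : ℝ) {V : ℝ → ℝ} (hV : Differentiable ℝ V)
    (u : ℤ → ℤ → ℤ → ℝ → ℝ) (m n p : ℤ) (t : ℝ)
    (h : DifferentiableAt ℝ (u m n p) t) (h' : DifferentiableAt ℝ (deriv (u m n p)) t)
    (hx : DifferentiableAt ℝ (u (m + 1) n p) t)
    (hy : DifferentiableAt ℝ (u m (n + 1) p) t)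
    (hz : DifferentiableAt ℝ (u m n (p + 1)) t)
    (heq : deriv (deriv (u m n p)) t - c ^ 2 * dLap u m n p t + μ * u m n p t
      + deriv V (u m n p t) - J = 0) :
    HasDerivAt (nodeH c μ J V u m n p)
      (c ^ 2 * (((u (m + 1) n p t - u m n p t) * (ud u (m + 1) n p t - ud u m n p t)
          + ud u m n p t * (u (m + 1) n p t + u (m - 1) n p t - 2 * u m n p t))
        + ((u m (n + 1) p t - u m n p t) * (ud u m (n + 1) p t - ud u m n p t)
          + ud u m n p t * (u m (n + 1) p t + u m (n - 1) p t - 2 * u m n p t))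
        + ((u m n (p + 1) t - u m n p t) * (ud u m n (p + 1) t - ud u m n p t)
          + ud u m n p t * (u m n (p + 1) t + u m n (p - 1) t - 2 * u m n p t)))) t := by
  have H := h.hasDerivAt
  have HV : HasDerivAt (fun s => V (u m n p s)) (deriv V (u m n p t) * deriv (u m n p) t) t :=
    (hV (u m n p t)).hasDerivAt.comp t H
  have key := (((((((h'.hasDerivAt.pow 2).add
    (((hx.hasDerivAt.sub H).pow 2).const_mul (c ^ 2))).add
    (((hy.hasDerivAt.sub H).pow 2).const_mul (c ^ 2))).add
    (((hz.hasDerivAt.sub H).pow 2).const_mul (c ^ 2))).add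
    ((H.pow 2).const_mul μ)).const_mul ((1:ℝ) / 2)).add HV).sub (H.const_mul J)
  refine key.congr_deriv ?_
  simp only [dLap] at heq
  simp only [ud, Pi.sub_apply]
  linear_combination deriv (u m n p) t * heq

/-- The conservative lattice (`β = γ = 0`) with discrete Neumann far boundaries and
time-independent Dirichlet boundary nodes conserves the total energy. -/
theorem lattice_energy_conservation
    (N : ℕ) (hN : 1 ≤ N) (c μ J : ℝ) (hc : 0 < c)
    (V : ℝ → ℝ) (hV : ContDiff ℝ 1 V)
    (u : ℤ → ℤ → ℤ → ℝ → ℝ)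
    (hdiff : ∀ m n p : ℤ, m ∈ Icc (0:ℤ) (N + 1) → n ∈ Icc (0:ℤ) (N + 1) →
      p ∈ Icc (0:ℤ) (N + 1) → ∀ t : ℝ,
        DifferentiableAt ℝ (u m n p) t ∧ DifferentiableAt ℝ (deriv (u m n p)) t)
    (heq : ∀ m n p : ℤ, m ∈ Icc (1:ℤ) (N:ℤ) → n ∈ Icc (1:ℤ) (N:ℤ) →
      p ∈ Icc (1:ℤ) (N:ℤ) → ∀ t : ℝ,
        deriv (deriv (u m n p)) t - c ^ 2 * dLap u m n p t + μ * u m n p t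
          + deriv V (u m n p t) - J = 0)
    (hneum : ∀ m n p : ℤ, m ∈ Icc (1:ℤ) (N:ℤ) → n ∈ Icc (1:ℤ) (N:ℤ) →
      p ∈ Icc (1:ℤ) (N:ℤ) → ∀ t : ℝ,
        u ((N:ℤ) + 1) n p t = u (N:ℤ) n p t
          ∧ u m ((N:ℤ) + 1) p t = u m (N:ℤ) p t
          ∧ u m n ((N:ℤ) + 1) t = u m n (N:ℤ) t)
    (hbdry : ∀ m n p : ℤ, m ∈ Icc (0:ℤ) (N + 1) → n ∈ Icc (0:ℤ) (N + 1) →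
      p ∈ Icc (0:ℤ) (N + 1) → (m = 0 ∨ n = 0 ∨ p = 0) →
        ∀ t s : ℝ, u m n p t = u m n p s) :
    ∀ t : ℝ, HasDerivAt (totE N c μ J V u) 0 t := by
  intro t
  have mem0 : (0:ℤ) ∈ Icc (0:ℤ) (N + 1) := by simp; omega
  have mem1 : (1:ℤ) ∈ Icc (0:ℤ) (N + 1) := by simp
  have mem : ∀ {m : ℤ}, m ∈ Icc (1:ℤ) (N:ℤ) → m ∈ Icc (0:ℤ) (N + 1) := by
    intro m hm
    simp only [mem_Icc] at hm ⊢
    omega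
  have mem_succ : ∀ {m : ℤ}, m ∈ Icc (1:ℤ) (N:ℤ) → m + 1 ∈ Icc (0:ℤ) (N + 1) := by
    intro m hm
    simp only [mem_Icc] at hm ⊢
    omega
  have hN1 : (1:ℤ) ∈ Icc (1:ℤ) (N:ℤ) := by
    simp only [mem_Icc]
    omega
  have bd : ∀ m n p : ℤ, m ∈ Icc (0:ℤ) (N + 1) → n ∈ Icc (0:ℤ) (N + 1) →
      p ∈ Icc (0:ℤ) (N + 1) → (m = 0 ∨ n = 0 ∨ p = 0) → HasDerivAt (u m n p) 0 t := by
    intro m n p hm hn hp h0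
    rw [show u m n p = fun _ => u m n p t from funext fun s => hbdry m n p hm hn hp h0 s t]
    exact hasDerivAt_const t _
  have hnode : ∀ m ∈ Icc (1:ℤ) (N:ℤ), ∀ n ∈ Icc (1:ℤ) (N:ℤ), ∀ p ∈ Icc (1:ℤ) (N:ℤ), _ :=
    fun m hm n hn p hp => hasDerivAt_nodeH c μ J (hV.differentiable one_ne_zero) u m n p t
      (hdiff m n p (mem hm) (mem hn) (mem hp) t).1
      (hdiff m n p (mem hm) (mem hn) (mem hp) t).2
      (hdiff (m + 1) n p (mem_succ hm) (mem hn) (mem hp) t).1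
      (hdiff m (n + 1) p (mem hm) (mem_succ hn) (mem hp) t).1
      (hdiff m n (p + 1) (mem hm) (mem hn) (mem_succ hp) t).1
      (heq m n p hm hn hp t)
  have hsum := HasDerivAt.fun_sum fun m hm => HasDerivAt.fun_sum fun n hn =>
    HasDerivAt.fun_sum fun p hp => hnode m hm n hn p hp
  have hfaceX := HasDerivAt.fun_sum fun n (hn : n ∈ Icc (1:ℤ) (N:ℤ)) =>
    HasDerivAt.fun_sum fun p (hp : p ∈ Icc (1:ℤ) (N:ℤ)) =>
      ((hdiff 1 n p mem1 (mem hn) (mem hp) t).1.hasDerivAt.fun_sub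
        (bd 0 n p mem0 (mem hn) (mem hp) (by simp))).fun_pow 2
  have hfaceY := HasDerivAt.fun_sum fun m (hm : m ∈ Icc (1:ℤ) (N:ℤ)) =>
    HasDerivAt.fun_sum fun p (hp : p ∈ Icc (1:ℤ) (N:ℤ)) =>
      ((hdiff m 1 p (mem hm) mem1 (mem hp) t).1.hasDerivAt.fun_sub
        (bd m 0 p (mem hm) mem0 (mem hp) (by simp))).fun_pow 2
  have hfaceZ := HasDerivAt.fun_sum fun m (hm : m ∈ Icc (1:ℤ) (N:ℤ)) =>
    HasDerivAt.fun_sum fun n (hn : n ∈ Icc (1:ℤ) (N:ℤ)) =>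
      ((hdiff m n 1 (mem hm) (mem hn) mem1 t).1.hasDerivAt.fun_sub
        (bd m n 0 (mem hm) (mem hn) mem0 (by simp))).fun_pow 2
  refine (hsum.add (((hfaceX.add hfaceY).add hfaceZ).const_mul (c ^ 2 / 2))).congr_deriv ?_
  have partsX : ∀ n ∈ Icc (1:ℤ) (N:ℤ), ∀ p ∈ Icc (1:ℤ) (N:ℤ),
      ∑ m ∈ Icc (1:ℤ) (N:ℤ),
        ((u (m + 1) n p t - u m n p t) * (ud u (m + 1) n p t - ud u m n p t)
          + ud u m n p t * (u (m + 1) n p t + u (m - 1) n p t - 2 * u m n p t))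
      = -((u 1 n p t - u 0 n p t) * ud u 1 n p t) := by
    intro n hn p hp
    rw [sum_Icc_mul_sub_add_mul_second_difference (fun m => u m n p t) (fun m => ud u m n p t),
      (hneum 1 n p hN1 hn hp t).1]
    ring
  have partsY : ∀ m ∈ Icc (1:ℤ) (N:ℤ), ∀ p ∈ Icc (1:ℤ) (N:ℤ),
      ∑ n ∈ Icc (1:ℤ) (N:ℤ),
        ((u m (n + 1) p t - u m n p t) * (ud u m (n + 1) p t - ud u m n p t)
          + ud u m n p t * (u m (n + 1) p t + u m (n - 1) p t - 2 * u m n p t))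
      = -((u m 1 p t - u m 0 p t) * ud u m 1 p t) := by
    intro m hm p hp
    rw [sum_Icc_mul_sub_add_mul_second_difference (fun n => u m n p t) (fun n => ud u m n p t),
      (hneum m 1 p hm hN1 hp t).2.1]
    ring
  have partsZ : ∀ m ∈ Icc (1:ℤ) (N:ℤ), ∀ n ∈ Icc (1:ℤ) (N:ℤ),
      ∑ p ∈ Icc (1:ℤ) (N:ℤ),
        ((u m n (p + 1) t - u m n p t) * (ud u m n (p + 1) t - ud u m n p t)
          + ud u m n p t * (u m n (p + 1) t + u m n (p - 1) t - 2 * u m n p t))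
      = -((u m n 1 t - u m n 0 t) * ud u m n 1 t) := by
    intro m hm n hn
    rw [sum_Icc_mul_sub_add_mul_second_difference (fun p => u m n p t) (fun p => ud u m n p t),
      (hneum m n 1 hm hn hN1 t).2.2]
    ring
  have sumX := sum_congr rfl fun n hn => sum_congr rfl fun p hp => partsX n hn p hp
  have sumY := sum_congr rfl fun m hm => sum_congr rfl fun p hp => partsY m hm p hp
  have sumZ := sum_congr rfl fun m hm => sum_congr rfl fun n hn => partsZ m hm n hn
  have commX : ∀ F : ℤ → ℤ → ℤ → ℝ, ∑ n ∈ Icc (1:ℤ) (N:ℤ), ∑ p ∈ Icc (1:ℤ) (N:ℤ),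
      ∑ m ∈ Icc (1:ℤ) (N:ℤ), F m n p = ∑ m ∈ Icc (1:ℤ) (N:ℤ), ∑ n ∈ Icc (1:ℤ) (N:ℤ),
      ∑ p ∈ Icc (1:ℤ) (N:ℤ), F m n p := fun F => by
    rw [sum_comm (s := Icc (1:ℤ) (N:ℤ)) (t := Icc (1:ℤ) (N:ℤ)) (f := fun m n => ∑ p ∈ _, F m n p)]
    exact sum_congr rfl fun n _ => sum_comm
  have commY : ∀ F : ℤ → ℤ → ℤ → ℝ, ∑ m ∈ Icc (1:ℤ) (N:ℤ), ∑ p ∈ Icc (1:ℤ) (N:ℤ),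
      ∑ n ∈ Icc (1:ℤ) (N:ℤ), F m n p = ∑ m ∈ Icc (1:ℤ) (N:ℤ), ∑ n ∈ Icc (1:ℤ) (N:ℤ),
      ∑ p ∈ Icc (1:ℤ) (N:ℤ), F m n p := fun F => sum_congr rfl fun m _ => sum_comm
  rw [commX fun m n p => (u (m + 1) n p t - u m n p t) * (ud u (m + 1) n p t - ud u m n p t)
    + ud u m n p t * (u (m + 1) n p t + u (m - 1) n p t - 2 * u m n p t)] at sumX
  rw [commY fun m n p => (u m (n + 1) p t - u m n p t) * (ud u m (n + 1) p t - ud u m n p t)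
    + ud u m n p t * (u m (n + 1) p t + u m (n - 1) p t - 2 * u m n p t)] at sumY
  have square : ∀ a b : ℝ, ((2:ℕ):ℝ) * a ^ (2 - 1) * (b - 0) = 2 * (a * b) := by
    intro a b
    norm_num
    ring
  simp only [sum_neg_distrib] at sumX sumY sumZ
  simp only [square, ← mul_sum]
  simp only [sum_add_distrib] at sumX sumY sumZ ⊢
  simp only [ud] at sumX sumY sumZ ⊢
  linear_combination c ^ 2 * (sumX + sumY + sumZ)

end
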